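/- Suppose Assumption 1 holds and X and Y are conditionally independent given Z. Then, for any fixed p ≥ 1, J ≥ 1 and fixed locations (t_j)_{j=1}^J in 𝒳̈ × 𝒴, the statistic n^{p/2}·CI_{n,p} converges in distribution, as n → ∞, to the law of ‖G‖_p^p = Σ_{j=1}^J |G_j|^p, where G ~ N(0,Σ) is a centered multivariate Gaussian vector on ℝ^J with covariance Σ = E[u_1 u_1ᵀ]. -/

import Mathlib

open MeasureTheory ProbabilityTheory Filter Topology Asymptotics
open scoped RealInnerProductSpace

noncomputable section

namespace CIPaper

/-- A positive definite kernel. -/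
def PosDefKernel {D : Type*} (k : D → D → ℝ) : Prop :=
  ∀ (n : ℕ) (x : Fin n → D) (c : Fin n → ℝ),
    0 ≤ ∑ i : Fin n, ∑ j : Fin n, c i * c j * k (x i) (x j)

/-- The mean embedding of `ν` with respect to the kernel `k`. -/
def meanEmbed {D : Type*} [MeasurableSpace D] (k : D → D → ℝ) (ν : Measure D) (t : D) : ℝ :=
  ∫ x, k x t ∂ν

/-- A kernel is characteristic if the mean embedding is injective on probability measures. -/
def Characteristic {D : Type*} [MeasurableSpace D] (k : D → D → ℝ) : Prop :=
  ∀ P Q : Measure D, IsProbabilityMeasure P → IsProbabilityMeasure Q →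
    (∀ t, meanEmbed k P t = meanEmbed k Q t) → P = Q

def BoundedKernel {D : Type*} (k : D → D → ℝ) : Prop := ∃ C, ∀ x y, |k x y| ≤ C

/-- Assumption 1 of the paper, for the tensor product kernel built from `kX` and `kY` :
the tensor kernel is positive definite, characteristic, bounded, continuous and analytic. -/
structure Assumption1 {DX DY : Type*} [MeasurableSpace DX] [MeasurableSpace DY]
    [NormedAddCommGroup DX] [NormedSpace ℝ DX] [NormedAddCommGroup DY] [NormedSpace ℝ DY]
    (kX : DX → DX → ℝ) (kY : DY → DY → ℝ) : Prop where
  posdef : PosDefKernel fun p q : DX × DY => kX p.1 q.1 * kY p.2 q.2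
  charac : Characteristic fun p q : DX × DY => kX p.1 q.1 * kY p.2 q.2
  bounded : BoundedKernel fun p q : DX × DY => kX p.1 q.1 * kY p.2 q.2
  continuous : Continuous fun pq : (DX × DY) × (DX × DY) => kX pq.1.1 pq.2.1 * kY pq.1.2 pq.2.2
  analytic : ∀ p : DX × DY, AnalyticOnNhd ℝ (fun q : DX × DY => kX p.1 q.1 * kY p.2 q.2) Set.univ

/-- The random metric `d_{p,J}` between two measures, with locations `t`. -/
def dpJ {D : Type*} [MeasurableSpace D] (k : D → D → ℝ) (p : ℕ) {J : ℕ}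
    (t : Fin J → D) (P Q : Measure D) : ℝ :=
  ((J : ℝ)⁻¹ * ∑ j : Fin J, |meanEmbed k P (t j) - meanEmbed k Q (t j)| ^ p) ^ ((p : ℝ)⁻¹)

/-- `P` is the measure `P_{Ẍ⊗Y|Z}` of the paper : a Borel probability measure with
`P(A×B) = E[E[1_A(Ẍ)|Z]·E[1_B(Y)|Z]]` for all measurable `A`, `B`. -/
def IsCondProdMeasure {Ω : Type*} [MeasurableSpace Ω] (μ : Measure Ω)
    {DX DZ DY : Type*} [MeasurableSpace DX] [MeasurableSpace DZ] [MeasurableSpace DY]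
    (X : Ω → DX) (Z : Ω → DZ) (Y : Ω → DY) (P : Measure ((DX × DZ) × DY)) : Prop :=
  IsProbabilityMeasure P ∧
    ∀ (A : Set (DX × DZ)) (B : Set DY), MeasurableSet A → MeasurableSet B →
      (P (A ×ˢ B)).toReal =
        ∫ ω, ((μ[fun ω' => A.indicator (fun _ => (1 : ℝ)) (X ω', Z ω') |
                MeasurableSpace.comap Z inferInstance]) ω)
            * ((μ[fun ω' => B.indicator (fun _ => (1 : ℝ)) (Y ω') |
                MeasurableSpace.comap Z inferInstance]) ω) ∂μ

/-- The witness function `Δ`. -/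
def witness {Ω : Type*} [MeasurableSpace Ω] (μ : Measure Ω)
    {DX DZ DY : Type*} [MeasurableSpace DZ]
    (kX : DX × DZ → DX × DZ → ℝ) (kY : DY → DY → ℝ)
    (X : Ω → DX) (Z : Ω → DZ) (Y : Ω → DY) (t1 : DX × DZ) (t2 : DY) : ℝ :=
  ∫ ω, (kX t1 (X ω, Z ω) -
          (μ[fun ω' => kX t1 (X ω', Z ω') | MeasurableSpace.comap Z inferInstance]) ω)
      * (kY t2 (Y ω) -
          (μ[fun ω' => kY t2 (Y ω') | MeasurableSpace.comap Z inferInstance]) ω) ∂μ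

/-- Cramér–Wold characterization: `ν` is the centered Gaussian measure on `ℝ^J` with
covariance matrix `S`. -/
def IsCenteredGaussian {J : ℕ} (S : Matrix (Fin J) (Fin J) ℝ) (ν : Measure (Fin J → ℝ)) : Prop :=
  IsProbabilityMeasure ν ∧
    ∀ a : Fin J → ℝ,
      ν.map (fun v => ∑ j, a j * v j) =
        gaussianReal 0 (Real.toNNReal (∑ i, ∑ j, a i * S i j * a j))

/-- Convergence in distribution (weak convergence of the image laws). -/
def TendstoInDistribution {Ω : Type*} [MeasurableSpace Ω] (μ : Measure Ω) {E : Type*}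
    [TopologicalSpace E] [MeasurableSpace E] (W : ℕ → Ω → E) (ν : Measure E) : Prop :=
  ∀ f : BoundedContinuousFunction E ℝ,
    Tendsto (fun n : ℕ => ∫ ω, f (W n ω) ∂μ) atTop (𝓝 (∫ x, f x ∂ν))

/-- The one-sample statistic `u_i(j)` of the paper (oracle version), where `e1`, `e2` are
the conditional mean functions. -/
def uStat {Ω DX DZ DY : Type*} (kX : DX × DZ → DX × DZ → ℝ) (kY : DY → DY → ℝ)
    (e1 : DX × DZ → DZ → ℝ) (e2 : DY → DZ → ℝ)
    (xS : ℕ → Ω → DX) (zS : ℕ → Ω → DZ) (yS : ℕ → Ω → DY)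
    {J : ℕ} (t : Fin J → (DX × DZ) × DY) (i : ℕ) (j : Fin J) (ω : Ω) : ℝ :=
  (kX (t j).1 (xS i ω, zS i ω) - e1 (t j).1 (zS i ω)) *
    (kY (t j).2 (yS i ω) - e2 (t j).2 (zS i ω))

/-- `S_n`, the empirical mean of the `u_i`. -/
def SStat {Ω DX DZ DY : Type*} (kX : DX × DZ → DX × DZ → ℝ) (kY : DY → DY → ℝ)
    (e1 : DX × DZ → DZ → ℝ) (e2 : DY → DZ → ℝ)
    (xS : ℕ → Ω → DX) (zS : ℕ → Ω → DZ) (yS : ℕ → Ω → DY)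
    {J : ℕ} (t : Fin J → (DX × DZ) × DY) (n : ℕ) (ω : Ω) : Fin J → ℝ :=
  fun j => (n : ℝ)⁻¹ * ∑ i ∈ Finset.range n, uStat kX kY e1 e2 xS zS yS t i j ω

/-- The covariance matrix `Σ = E[u₁ u₁ᵀ]`. -/
def covMat {Ω DX DZ DY : Type*} [MeasurableSpace Ω] (μ : Measure Ω)
    (kX : DX × DZ → DX × DZ → ℝ) (kY : DY → DY → ℝ)
    (e1 : DX × DZ → DZ → ℝ) (e2 : DY → DZ → ℝ)
    (xS : ℕ → Ω → DX) (zS : ℕ → Ω → DZ) (yS : ℕ → Ω → DY)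
    {J : ℕ} (t : Fin J → (DX × DZ) × DY) : Matrix (Fin J) (Fin J) ℝ :=
  Matrix.of fun j j' =>
    ∫ ω, uStat kX kY e1 e2 xS zS yS t 0 j ω * uStat kX kY e1 e2 xS zS yS t 0 j' ω ∂μ

/-- The empirical covariance matrix `Σ̂_n` of the oracle `u_i`. -/
def covHat {Ω DX DZ DY : Type*} (kX : DX × DZ → DX × DZ → ℝ) (kY : DY → DY → ℝ)
    (e1 : DX × DZ → DZ → ℝ) (e2 : DY → DZ → ℝ)
    (xS : ℕ → Ω → DX) (zS : ℕ → Ω → DZ) (yS : ℕ → Ω → DY)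
    {J : ℕ} (t : Fin J → (DX × DZ) × DY) (n : ℕ) (ω : Ω) : Matrix (Fin J) (Fin J) ℝ :=
  Matrix.of fun j j' => (n : ℝ)⁻¹ * ∑ i ∈ Finset.range n,
    uStat kX kY e1 e2 xS zS yS t i j ω * uStat kX kY e1 e2 xS zS yS t i j' ω

/-- The regularized least squares estimator built from the first `r` samples `zs` with
targets `target`, kernel `kZ` and regularization parameter `lam`. -/
def rls {DZ : Type*} (kZ : DZ → DZ → ℝ) (zs : ℕ → DZ) (target : ℕ → ℝ)
    (r : ℕ) (lam : ℝ) (z : DZ) : ℝ :=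
  ∑ i : Fin r,
    (((Matrix.of fun i l : Fin r => kZ (zs i) (zs l)) +
        ((r : ℝ) * lam) • (1 : Matrix (Fin r) (Fin r) ℝ))⁻¹.mulVec
      fun i : Fin r => target i) i * kZ (zs i) z

/-- The statistic `ũ_{i,r}(j)` built from the RLS estimators. -/
def uTildeStat {Ω DX DZ DY : Type*} (kX : DX × DZ → DX × DZ → ℝ) (kY : DY → DY → ℝ)
    {J : ℕ} (kZ1 kZ2 : Fin J → DZ → DZ → ℝ)
    (xS : ℕ → Ω → DX) (zS : ℕ → Ω → DZ) (yS : ℕ → Ω → DY)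
    (t : Fin J → (DX × DZ) × DY) (r : ℕ) (lam : ℝ) (i : ℕ) (j : Fin J) (ω : Ω) : ℝ :=
  (kX (t j).1 (xS i ω, zS i ω) -
      rls (kZ1 j) (fun l => zS l ω) (fun l => kX (t j).1 (xS l ω, zS l ω)) r lam (zS i ω)) *
    (kY (t j).2 (yS i ω) -
      rls (kZ2 j) (fun l => zS l ω) (fun l => kY (t j).2 (yS l ω)) r lam (zS i ω))

/-- `S̃_{n,r}`. -/
def STilde {Ω DX DZ DY : Type*} (kX : DX × DZ → DX × DZ → ℝ) (kY : DY → DY → ℝ)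
    {J : ℕ} (kZ1 kZ2 : Fin J → DZ → DZ → ℝ)
    (xS : ℕ → Ω → DX) (zS : ℕ → Ω → DZ) (yS : ℕ → Ω → DY)
    (t : Fin J → (DX × DZ) × DY) (n r : ℕ) (lam : ℝ) (ω : Ω) : Fin J → ℝ :=
  fun j => (n : ℝ)⁻¹ * ∑ i ∈ Finset.range n,
    uTildeStat kX kY kZ1 kZ2 xS zS yS t r lam i j ω

/-- `Σ_{n,r}`, the empirical covariance matrix of the `ũ_{i,r}`. -/
def covTilde {Ω DX DZ DY : Type*} (kX : DX × DZ → DX × DZ → ℝ) (kY : DY → DY → ℝ)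
    {J : ℕ} (kZ1 kZ2 : Fin J → DZ → DZ → ℝ)
    (xS : ℕ → Ω → DX) (zS : ℕ → Ω → DZ) (yS : ℕ → Ω → DY)
    (t : Fin J → (DX × DZ) × DY) (n r : ℕ) (lam : ℝ) (ω : Ω) : Matrix (Fin J) (Fin J) ℝ :=
  Matrix.of fun j j' => (n : ℝ)⁻¹ * ∑ i ∈ Finset.range n,
    uTildeStat kX kY kZ1 kZ2 xS zS yS t r lam i j ω *
      uTildeStat kX kY kZ1 kZ2 xS zS yS t r lam i j' ω

open scoped Classical in
/-- The inverse square root `M^{-1/2}` of a positive semidefinite matrix. -/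
def invSqrtMat {J : ℕ} (M : Matrix (Fin J) (Fin J) ℝ) : Matrix (Fin J) (Fin J) ℝ :=
  if h : M.PosSemidef then
    ((h.1.eigenvectorUnitary : Matrix (Fin J) (Fin J) ℝ) *
      Matrix.diagonal (Real.sqrt ∘ h.1.eigenvalues) *
      (star h.1.eigenvectorUnitary : Matrix (Fin J) (Fin J) ℝ))⁻¹
  else 0

/-- The chi-square distribution with `J` degrees of freedom, realized as the law of the sum of
squares of `J` independent standard Gaussians. -/
def chiSq (J : ℕ) : Measure ℝ :=
  (Measure.pi fun _ : Fin J => gaussianReal 0 1).map fun v => ∑ j, v j ^ 2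

/-- Assumption 2 of the paper for the operator `L` on `L²(P_Z)` :
`Tr((L + λ)⁻¹ L) ≤ Q λ^{-γ}`, the trace of the positive operator being computed in any
Hilbert basis. -/
def TraceAssumption {DZ : Type*} [MeasurableSpace DZ] (PZ : Measure DZ)
    (L : Lp ℝ 2 PZ →L[ℝ] Lp ℝ 2 PZ) (Q γ : ℝ) : Prop :=
  ∀ lam : ℝ, 0 < lam → ∀ (ι : Type) (e : HilbertBasis ι ℝ (Lp ℝ 2 PZ)),
    ∑' i, ⟪(Ring.inverse (L + lam • (1 : Lp ℝ 2 PZ →L[ℝ] Lp ℝ 2 PZ)) * L) (e i), e i⟫ ≤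
      Q * lam ^ (-γ)

/-- `P = L^s` : `P` is self-adjoint and acts as `c ^ s` on every eigenvector of `L`
(this determines the fractional power, via functional calculus, of a positive self-adjoint
compact operator). -/
def IsFracPower {H : Type*} [NormedAddCommGroup H] [InnerProductSpace ℝ H]
    (L : H →L[ℝ] H) (s : ℝ) (P : H →L[ℝ] H) : Prop :=
  (∀ v w : H, ⟪P v, w⟫ = ⟪v, P w⟫) ∧
    ∀ (c : ℝ) (v : H), L v = c • v → P v = c ^ s • v

end CIPaper

open CIPaper

/-!
Conditional independence gives `E[k_𝒴(t, Y) | Z, X] = E[k_𝒴(t, Y) | Z]`. Conditioning on `(Z, X)`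
therefore annihilates the `Y`-residual in `u_i(j)` while the `Ẍ`-residual factors out, so each
`u_i` is centred. The Cramér–Wold device reduces the central limit theorem for `√n S_n` to the
scalar one, and the claim follows by applying the continuous map `v ↦ ‖v‖_p^p`, since
`n^{p/2} ‖S_n‖_p^p = ‖√n S_n‖_p^p`.
-/

section CramerWold

lemma charFun_map_eq_charFun_map_toDualMap {Ω F : Type*} [MeasurableSpace Ω]
    [NormedAddCommGroup F] [InnerProductSpace ℝ F] [MeasurableSpace F] [BorelSpace F]
    {μ : Measure Ω} {X : Ω → F} (hX : AEMeasurable X μ) (a : F) :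
    charFun (μ.map X) a = charFun (μ.map (InnerProductSpace.toDualMap ℝ F a ∘ X)) 1 := by
  have ha : Measurable (InnerProductSpace.toDualMap ℝ F a) :=
    (InnerProductSpace.toDualMap ℝ F a).continuous.measurable
  rw [charFun_eq_charFunDual_toDualMap, charFunDual_eq_charFun_map_one,
    AEMeasurable.map_map_of_aemeasurable ha.aemeasurable hX]

variable {E F Ω' : Type*} {Ω : ℕ → Type*} [∀ n, MeasurableSpace (Ω n)] [MeasurableSpace Ω']
  {μ : (n : ℕ) → Measure (Ω n)} [∀ n, IsProbabilityMeasure (μ n)] {μ' : Measure Ω'}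
  [IsProbabilityMeasure μ']

lemma tendstoInDistribution_of_forall_toDualMap [NormedAddCommGroup F] [InnerProductSpace ℝ F]
    [FiniteDimensional ℝ F] [MeasurableSpace F] [BorelSpace F]
    {X : (n : ℕ) → Ω n → F} {Z : Ω' → F}
    (hX : ∀ n, AEMeasurable (X n) (μ n)) (hZ : AEMeasurable Z μ')
    (h : ∀ a : F, MeasureTheory.TendstoInDistribution
      (fun n ↦ InnerProductSpace.toDualMap ℝ F a ∘ X n) atTop
      (InnerProductSpace.toDualMap ℝ F a ∘ Z) μ μ') :
    MeasureTheory.TendstoInDistribution X atTop Z μ μ' := by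
  refine ⟨hX, hZ, ProbabilityMeasure.tendsto_iff_tendsto_charFun.2 fun a ↦ ?_⟩
  simp only [ProbabilityMeasure.coe_mk, charFun_map_eq_charFun_map_toDualMap, hX, hZ]
  exact ProbabilityMeasure.tendsto_iff_tendsto_charFun.1 (h a).tendsto 1

variable [NormedAddCommGroup E] [NormedSpace ℝ E] [FiniteDimensional ℝ E] [MeasurableSpace E]
  [BorelSpace E]

theorem tendstoInDistribution_of_forall_strongDual {X : (n : ℕ) → Ω n → E} {Z : Ω' → E}
    (hX : ∀ n, AEMeasurable (X n) (μ n)) (hZ : AEMeasurable Z μ')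
    (h : ∀ L : StrongDual ℝ E,
      MeasureTheory.TendstoInDistribution (fun n ↦ L ∘ X n) atTop (L ∘ Z) μ μ') :
    MeasureTheory.TendstoInDistribution X atTop Z μ μ' := by
  let e : E ≃L[ℝ] EuclideanSpace ℝ (Fin (Module.finrank ℝ E)) := toEuclidean
  have he : Measurable e := e.continuous.measurable
  have he_tendsto :
      MeasureTheory.TendstoInDistribution (fun n ↦ e ∘ X n) atTop (e ∘ Z) μ μ' :=
    tendstoInDistribution_of_forall_toDualMap (fun n ↦ he.comp_aemeasurable (hX n))
      (he.comp_aemeasurable hZ)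
      fun a ↦ h (InnerProductSpace.toDualMap ℝ _ a ∘L e.toContinuousLinearMap)
  simpa [Function.comp_def] using he_tendsto.continuous_comp (g := e.symm) e.symm.continuous

theorem tendstoInDistribution_inv_sqrt_smul_sum_sub {Ω : Type*} [MeasurableSpace Ω]
    {P : Measure Ω} [IsProbabilityMeasure P] {X : ℕ → Ω → E} {G : Ω' → E} (hG : AEMeasurable G μ')
    (hlaw : ∀ L : StrongDual ℝ E, HasLaw (L ∘ G) (gaussianReal 0 Var[L ∘ X 0; P].toNNReal) μ')
    (hX : MemLp (X 0) 2 P) (hindep : iIndepFun X P)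
    (hident : ∀ i, IdentDistrib (X i) (X 0) P P) :
    MeasureTheory.TendstoInDistribution
      (fun (n : ℕ) ω ↦ (√n)⁻¹ • (∑ k ∈ Finset.range n, X k ω - (n : ℝ) • P[X 0]))
      atTop G (fun _ ↦ P) μ' := by
  have hXm (i : ℕ) : AEMeasurable (X i) P := (hident i).aemeasurable_fst
  refine tendstoInDistribution_of_forall_strongDual (fun n ↦ by fun_prop) hG fun L ↦ ?_
  have hL : Measurable L := L.continuous.measurable
  have hmean : ∫ ω, L (X 0 ω) ∂P = L P[X 0] :=
    L.integral_comp_comm (hX.integrable one_le_two)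
  have hclt := tendstoInDistribution_inv_sqrt_mul_sum_sub (X := fun i ↦ L ∘ X i) (hlaw L)
    (L.comp_memLp' hX) (hindep.comp (fun _ ↦ L) fun _ ↦ hL) (fun i ↦ (hident i).comp hL)
  simpa [Function.comp_def, hmean] using hclt

end CramerWold

lemma variance_fun_sum_mul_of_integral_eq_zero {Ω ι : Type*} [MeasurableSpace Ω] [Fintype ι]
    {μ : Measure Ω} [IsProbabilityMeasure μ] {W : Ω → ι → ℝ}
    (hW : ∀ j, MemLp (fun ω ↦ W ω j) 2 μ) (hmean : ∀ j, ∫ ω, W ω j ∂μ = 0) (a : ι → ℝ) :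
    Var[fun ω ↦ ∑ j, a j * W ω j; μ] = ∑ i, ∑ j, a i * (∫ ω, W ω i * W ω j ∂μ) * a j := by
  rw [variance_fun_sum fun j ↦ (hW j).const_mul (a j)]
  refine Finset.sum_congr rfl fun i _ ↦ Finset.sum_congr rfl fun j _ ↦ ?_
  rw [covariance_const_mul_left, covariance_const_mul_right, covariance_eq_sub (hW i) (hW j),
    hmean i]
  simp only [Pi.mul_apply]
  ring

lemma exists_strongDual_pi_apply_eq_sum_mul {ι : Type*} [Fintype ι] (L : StrongDual ℝ (ι → ℝ)) :
    ∃ a : ι → ℝ, ∀ v, L v = ∑ j, a j * v j := by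
  classical
  refine ⟨fun i ↦ L fun j ↦ if i = j then 1 else 0, fun v ↦ ?_⟩
  simpa [mul_comm] using LinearMap.pi_apply_eq_sum_univ (L : (ι → ℝ) →ₗ[ℝ] ℝ) v

lemma CIPaper.TendstoInDistribution.of_measureTheory {Ω E : Type*} [MeasurableSpace Ω]
    {μ : Measure Ω} [IsProbabilityMeasure μ] [TopologicalSpace E] [MeasurableSpace E]
    [OpensMeasurableSpace E] {W : ℕ → Ω → E} {ν : Measure E} [IsProbabilityMeasure ν]
    (h : MeasureTheory.TendstoInDistribution W atTop id (fun _ ↦ μ) ν) :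
    CIPaper.TendstoInDistribution μ W ν := by
  intro f
  have hf := ProbabilityMeasure.tendsto_iff_forall_integral_tendsto.1 h.tendsto f
  simpa [integral_map (h.forall_aemeasurable _) f.continuous.aestronglyMeasurable] using hf

theorem CIPaper.IsCenteredGaussian.tendstoInDistribution_inv_sqrt_smul_sum {Ω : Type*}
    [MeasurableSpace Ω] {μ : Measure Ω} [IsProbabilityMeasure μ] {J : ℕ}
    {W : ℕ → Ω → Fin J → ℝ} {ν : Measure (Fin J → ℝ)}
    (hν : IsCenteredGaussian (.of fun i j ↦ ∫ ω, W 0 ω i * W 0 ω j ∂μ) ν)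
    (hW : ∀ j, MemLp (fun ω ↦ W 0 ω j) 2 μ) (hmean : ∀ j, ∫ ω, W 0 ω j ∂μ = 0)
    (hindep : iIndepFun W μ) (hident : ∀ i, IdentDistrib (W i) (W 0) μ μ) :
    CIPaper.TendstoInDistribution μ
      (fun (n : ℕ) ω ↦ (√n)⁻¹ • ∑ k ∈ Finset.range n, W k ω) ν := by
  have := hν.1
  have hmean_vec : ∫ ω, W 0 ω ∂μ = 0 := by
    ext j
    rw [eval_integral fun j ↦ (hW j).integrable one_le_two]
    exact hmean j
  have hlaw (L : StrongDual ℝ (Fin J → ℝ)) :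
      HasLaw (L ∘ id) (gaussianReal 0 Var[L ∘ W 0; μ].toNNReal) ν := by
    obtain ⟨a, ha⟩ := exists_strongDual_pi_apply_eq_sum_mul L
    refine ⟨by fun_prop, ?_⟩
    simp only [Function.comp_def, id_eq, ha]
    rw [variance_fun_sum_mul_of_integral_eq_zero hW hmean a]
    exact hν.2 a
  refine .of_measureTheory ?_
  simpa [hmean_vec] using
    tendstoInDistribution_inv_sqrt_smul_sum_sub aemeasurable_id hlaw (.of_eval hW) hindep hident

section ConditionalIndependence

lemma integral_mul_eq_zero_of_condExp_ae_eq_zero {Ω : Type*} {m mΩ : MeasurableSpace Ω}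
    {μ : Measure Ω} {A B : Ω → ℝ} (hm : m ≤ mΩ) [SigmaFinite (μ.trim hm)]
    (hA : StronglyMeasurable[m] A) (hB : Integrable B μ) (hAB : Integrable (A * B) μ)
    (hB_zero : μ[B | m] =ᵐ[μ] 0) : ∫ ω, A ω * B ω ∂μ = 0 := by
  have hpull : μ[A * B | m] =ᵐ[μ] 0 := by
    filter_upwards [condExp_mul_of_stronglyMeasurable_left hA hAB hB, hB_zero] with ω h h_zero
    simp [h, h_zero]
  calc
    ∫ ω, A ω * B ω ∂μ = ∫ ω, (μ[A * B | m]) ω ∂μ := (integral_condExp hm).symm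
    _ = 0 := integral_eq_zero_of_ae hpull

lemma condExp_sub_ae_eq_zero_of_ae_eq_condExp {Ω F : Type*} {m mΩ : MeasurableSpace Ω}
    {μ : Measure Ω} [NormedAddCommGroup F] [NormedSpace ℝ F] [CompleteSpace F] {A B : Ω → F}
    (hm : m ≤ mΩ) [SigmaFinite (μ.trim hm)] (hA : StronglyMeasurable[m] A)
    (hB : Integrable B μ) (hAB : A =ᵐ[μ] μ[B | m]) : μ[B - A | m] =ᵐ[μ] 0 := by
  have hA_int : Integrable A μ := integrable_condExp.congr hAB.symm
  filter_upwards [condExp_sub hB hA_int m, hAB] with ω hsub hω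
  rw [hsub, Pi.sub_apply, condExp_of_stronglyMeasurable hm hA hA_int, hω, sub_self, Pi.zero_apply]

lemma memLp_sub_of_ae_eq_condExp {Ω : Type*} {m _ : MeasurableSpace Ω} {μ : Measure Ω}
    {F E : Ω → ℝ} {q : ENNReal} (hq : 1 ≤ q) (hF : MemLp F q μ) (hE : E =ᵐ[μ] μ[F | m]) :
    MemLp (F - E) q μ :=
  hF.sub ((hF.condExp hq).ae_eq hE.symm)

variable {Ω DX DY DZ : Type*} [MeasurableSpace Ω] {μ : Measure Ω}
  [mZ : MeasurableSpace DZ] {X : Ω → DX} {Z : Ω → DZ} {Y : Ω → DY}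

/-- The product of the residuals of `f (X, Z)` and `g Y` after subtracting candidate regression
functions `a` and `b` of `Z`, as a function of the observation `((X, Z), Y)`. -/
def residualProduct (f : DX × DZ → ℝ) (g : DY → ℝ) (a b : DZ → ℝ) (q : (DX × DZ) × DY) : ℝ :=
  (f q.1 - a q.1.2) * (g q.2 - b q.1.2)

variable {f : DX × DZ → ℝ} {g : DY → ℝ} {a b : DZ → ℝ}

lemma memLp_residualProduct {q r s : ENNReal} [q.HolderTriple r s] (hq : 1 ≤ q) (hr : 1 ≤ r)
    (hf : MemLp (fun ω ↦ f (X ω, Z ω)) q μ) (hg : MemLp (fun ω ↦ g (Y ω)) r μ)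
    (ha : (fun ω ↦ a (Z ω)) =ᵐ[μ] μ[fun ω ↦ f (X ω, Z ω) | mZ.comap Z])
    (hb : (fun ω ↦ b (Z ω)) =ᵐ[μ] μ[fun ω ↦ g (Y ω) | mZ.comap Z]) :
    MemLp (fun ω ↦ residualProduct f g a b ((X ω, Z ω), Y ω)) s μ :=
  (memLp_sub_of_ae_eq_condExp hr hg hb).mul (memLp_sub_of_ae_eq_condExp hq hf ha)

variable [MeasurableSpace DX] [MeasurableSpace DY]

lemma measurable_residualProduct (hf : Measurable f) (hg : Measurable g) (ha : Measurable a)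
    (hb : Measurable b) : Measurable (residualProduct f g a b) := by
  unfold residualProduct
  fun_prop

theorem condExp_comap_prodMk_ae_eq_of_condIndepFun [StandardBorelSpace Ω]
    [StandardBorelSpace DX] [StandardBorelSpace DY] [IsProbabilityMeasure μ]
    (hX : Measurable X) (hZ : Measurable Z) (hY : Measurable Y)
    (hXY : CondIndepFun (mZ.comap Z) hZ.comap_le X Y μ)
    {F : Type*} [NormedAddCommGroup F] [NormedSpace ℝ F] [CompleteSpace F] {φ : DY → F}
    (hφ : StronglyMeasurable φ) (hφY : Integrable (fun ω ↦ φ (Y ω)) μ) :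
    μ[fun ω ↦ φ (Y ω) | MeasurableSpace.comap (fun ω ↦ (Z ω, X ω)) inferInstance] =ᵐ[μ]
      μ[fun ω ↦ φ (Y ω) | mZ.comap Z] := by
  have := nonempty_of_isProbabilityMeasure μ
  have : Nonempty DX := Nonempty.map X ‹_›
  have : Nonempty DY := Nonempty.map Y ‹_›
  have hZX : Measurable fun ω ↦ (Z ω, X ω) := hZ.prodMk hX
  have hkernel := ae_of_ae_map hZX.aemeasurable
    ((condIndepFun_iff_condDistrib_prod_ae_eq_prodMkRight hY hX hZ).1 hXY)
  filter_upwards [hkernel, condExp_ae_eq_integral_condDistrib hZX hY.aemeasurable hφ hφY,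
    condExp_ae_eq_integral_condDistrib hZ hY.aemeasurable hφ hφY] with ω hω hω_ZX hω_Z
  rw [hω_ZX, hω_Z, hω, Kernel.prodMkRight_apply]

theorem integral_residualProduct_eq_zero_of_condIndepFun [StandardBorelSpace Ω]
    [StandardBorelSpace DX] [StandardBorelSpace DY] [IsProbabilityMeasure μ]
    (hX : Measurable X) (hZ : Measurable Z) (hY : Measurable Y)
    (hXY : CondIndepFun (mZ.comap Z) hZ.comap_le X Y μ)
    (hf : Measurable f) (hg : Measurable g) (ha : Measurable a) (hb : Measurable b)
    (hfL2 : MemLp (fun ω ↦ f (X ω, Z ω)) 2 μ) (hgL2 : MemLp (fun ω ↦ g (Y ω)) 2 μ)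
    (ha_eq : (fun ω ↦ a (Z ω)) =ᵐ[μ] μ[fun ω ↦ f (X ω, Z ω) | mZ.comap Z])
    (hb_eq : (fun ω ↦ b (Z ω)) =ᵐ[μ] μ[fun ω ↦ g (Y ω) | mZ.comap Z]) :
    ∫ ω, residualProduct f g a b ((X ω, Z ω), Y ω) ∂μ = 0 := by
  have hgY : Integrable (fun ω ↦ g (Y ω)) μ := hgL2.integrable one_le_two
  have hZX : Measurable[MeasurableSpace.comap (fun ω ↦ (Z ω, X ω)) inferInstance]
      fun ω ↦ (Z ω, X ω) := comap_measurable _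
  have hA : Measurable fun q : DZ × DX ↦ f (q.2, q.1) - a q.1 := by fun_prop
  have hB_zero := condExp_sub_ae_eq_zero_of_ae_eq_condExp (hZ.prodMk hX).comap_le
    ((hb.comp measurable_fst).comp hZX).stronglyMeasurable hgY
    (hb_eq.trans (condExp_comap_prodMk_ae_eq_of_condIndepFun hX hZ hY hXY hg.stronglyMeasurable
      hgY).symm)
  have hAB := memLp_residualProduct (s := 1) one_le_two one_le_two hfL2 hgL2 ha_eq hb_eq
  exact integral_mul_eq_zero_of_condExp_ae_eq_zero (hZ.prodMk hX).comap_le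
    (hA.comp hZX).stronglyMeasurable (hgY.sub (integrable_condExp.congr hb_eq.symm))
    (memLp_one_iff_integrable.1 hAB) hB_zero

end ConditionalIndependence

section Kernels

lemma CIPaper.Characteristic.exists_ne_zero {D : Type*} [MeasurableSpace D]
    [MeasurableSpace.SeparatesPoints D] [Nontrivial D] {k : D → D → ℝ} (hk : Characteristic k) :
    ∃ x y, k x y ≠ 0 := by
  by_contra! hzero
  obtain ⟨x, y, hxy⟩ := exists_pair_ne D
  refine hxy (dirac_eq_dirac_iff.1 (hk _ _ inferInstance inferInstance fun t ↦ ?_))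
  simp [meanEmbed, hzero]

variable {DX DY : Type*} [MeasurableSpace DX] [MeasurableSpace DY] [NormedAddCommGroup DX]
  [NormedSpace ℝ DX] [NormedAddCommGroup DY] [NormedSpace ℝ DY]
  [MeasurableSpace.SeparatesPoints (DX × DY)] [Nontrivial (DX × DY)]
  {kX : DX → DX → ℝ} {kY : DY → DY → ℝ}

lemma CIPaper.Assumption1.boundedKernel_left (hk : Assumption1 kX kY) : BoundedKernel kX := by
  obtain ⟨⟨_, y⟩, ⟨_, y'⟩, hne⟩ := hk.charac.exists_ne_zero
  obtain ⟨C, hC⟩ := hk.bounded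
  refine ⟨C / |kY y y'|, fun x x' ↦ ?_⟩
  rw [le_div_iff₀ (abs_pos.2 (right_ne_zero_of_mul hne)), ← abs_mul]
  exact hC (x, y) (x', y')

lemma CIPaper.Assumption1.boundedKernel_right (hk : Assumption1 kX kY) : BoundedKernel kY := by
  obtain ⟨⟨x, _⟩, ⟨x', _⟩, hne⟩ := hk.charac.exists_ne_zero
  obtain ⟨C, hC⟩ := hk.bounded
  refine ⟨C / |kX x x'|, fun y y' ↦ ?_⟩
  rw [le_div_iff₀' (abs_pos.2 (left_ne_zero_of_mul hne)), ← abs_mul]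
  exact hC (x, y) (x', y')

lemma CIPaper.Assumption1.continuous_left (hk : Assumption1 kX kY) (x : DX) :
    Continuous (kX x) := by
  obtain ⟨⟨_, y⟩, ⟨_, y'⟩, hne⟩ := hk.charac.exists_ne_zero
  have hcont : Continuous fun x' ↦ kX x x' * kY y y' :=
    hk.continuous.comp (f := fun x' ↦ ((x, y), (x', y'))) (by fun_prop)
  simpa [right_ne_zero_of_mul hne] using hcont.div_const (kY y y')

lemma CIPaper.Assumption1.continuous_right (hk : Assumption1 kX kY) (y : DY) :
    Continuous (kY y) := by
  obtain ⟨⟨x, _⟩, ⟨x', _⟩, hne⟩ := hk.charac.exists_ne_zero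
  have hcont : Continuous fun y' ↦ kX x x' * kY y y' :=
    hk.continuous.comp (f := fun y' ↦ ((x, y), (x', y'))) (by fun_prop)
  simpa [left_ne_zero_of_mul hne] using hcont.div_const (kX x x')

lemma CIPaper.BoundedKernel.memLp {Ω D : Type*} [MeasurableSpace Ω] [MeasurableSpace D]
    {μ : Measure Ω} [IsFiniteMeasure μ] {k : D → D → ℝ} (hk : BoundedKernel k) {x : D}
    (hkx : Measurable (k x)) {V : Ω → D} (hV : Measurable V) (q : ENNReal) :
    MemLp (fun ω ↦ k x (V ω)) q μ := by
  obtain ⟨C, hC⟩ := hk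
  exact .of_bound (hkx.comp hV).aestronglyMeasurable C (ae_of_all _ fun ω ↦ hC x (V ω))

end Kernels

lemma rpow_half_mul_abs_inv_mul_rpow {n : ℝ} (hn : 0 ≤ n) (p s : ℝ) :
    n ^ (p / 2) * |n⁻¹ * s| ^ p = |(√n)⁻¹ * s| ^ p := by
  rw [Real.rpow_div_two_eq_sqrt p hn, ← Real.mul_rpow (Real.sqrt_nonneg n) (abs_nonneg _)]
  congr 1
  calc
    √n * |n⁻¹ * s| = |√n / n * s| := by
      rw [div_eq_mul_inv, mul_assoc, abs_mul √n, abs_of_nonneg (Real.sqrt_nonneg n)]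
    _ = |(√n)⁻¹ * s| := by rw [Real.sqrt_div_self]

lemma CIPaper.rpow_half_mul_sum_abs_SStat_rpow {Ω DX DY DZ : Type*}
    (kX : DX × DZ → DX × DZ → ℝ) (kY : DY → DY → ℝ) (e1 : DX × DZ → DZ → ℝ) (e2 : DY → DZ → ℝ)
    (xS : ℕ → Ω → DX) (zS : ℕ → Ω → DZ) (yS : ℕ → Ω → DY) {J : ℕ} (t : Fin J → (DX × DZ) × DY)
    (p : ℝ) (n : ℕ) (ω : Ω) :
    (n : ℝ) ^ (p / 2) * ∑ j, |SStat kX kY e1 e2 xS zS yS t n ω j| ^ p =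
      ∑ j, |((√n)⁻¹ • ∑ i ∈ Finset.range n, fun j ↦ uStat kX kY e1 e2 xS zS yS t i j ω) j| ^ p := by
  rw [Finset.mul_sum]
  refine Finset.sum_congr rfl fun j _ ↦ ?_
  rw [Pi.smul_apply, Finset.sum_apply]
  exact rpow_half_mul_abs_inv_mul_rpow n.cast_nonneg p _

theorem statement_9_general {Ω₀ Ω DX DY DZ : Type*} [MeasurableSpace Ω₀] [StandardBorelSpace Ω₀]
    [MeasurableSpace Ω] [MeasurableSpace DX] [StandardBorelSpace DX] [MeasurableSpace DY]
    [StandardBorelSpace DY] [mZ : MeasurableSpace DZ]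
    {μ₀ : Measure Ω₀} [IsProbabilityMeasure μ₀] {μ : Measure Ω} [IsProbabilityMeasure μ]
    {X : Ω₀ → DX} {Z : Ω₀ → DZ} {Y : Ω₀ → DY}
    (hX : Measurable X) (hZ : Measurable Z) (hY : Measurable Y) {p : ℝ} (hp : 0 < p) {J : ℕ}
    {t : Fin J → (DX × DZ) × DY}
    {kX : DX × DZ → DX × DZ → ℝ} {kY : DY → DY → ℝ}
    (hkXm : ∀ j, Measurable (kX (t j).1)) (hkYm : ∀ j, Measurable (kY (t j).2))
    (hkX : ∀ j, MemLp (fun ω ↦ kX (t j).1 (X ω, Z ω)) 4 μ₀)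
    (hkY : ∀ j, MemLp (fun ω ↦ kY (t j).2 (Y ω)) 4 μ₀)
    {e1 : DX × DZ → DZ → ℝ} {e2 : DY → DZ → ℝ}
    (he1m : ∀ j, Measurable (e1 (t j).1)) (he2m : ∀ j, Measurable (e2 (t j).2))
    (he1 : ∀ j, (fun ω ↦ e1 (t j).1 (Z ω)) =ᵐ[μ₀]
      μ₀[fun ω ↦ kX (t j).1 (X ω, Z ω) | mZ.comap Z])
    (he2 : ∀ j, (fun ω ↦ e2 (t j).2 (Z ω)) =ᵐ[μ₀] μ₀[fun ω ↦ kY (t j).2 (Y ω) | mZ.comap Z])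
    {xS : ℕ → Ω → DX} {zS : ℕ → Ω → DZ} {yS : ℕ → Ω → DY}
    (hindep : iIndepFun (fun i ω ↦ ((xS i ω, zS i ω), yS i ω)) μ)
    (hident : ∀ i, IdentDistrib (fun ω ↦ ((xS i ω, zS i ω), yS i ω))
      (fun ω ↦ ((X ω, Z ω), Y ω)) μ μ₀)
    (hXY : CondIndepFun (mZ.comap Z) hZ.comap_le X Y μ₀)
    {ν : Measure (Fin J → ℝ)} (hν : IsCenteredGaussian (covMat μ kX kY e1 e2 xS zS yS t) ν)
    (f : BoundedContinuousFunction ℝ ℝ) :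
    Tendsto (fun n : ℕ ↦ ∫ ω, f ((n : ℝ) ^ (p / 2) *
        ∑ j, |SStat kX kY e1 e2 xS zS yS t n ω j| ^ p) ∂μ) atTop
      (𝓝 (∫ v, f (∑ j, |v j| ^ p) ∂ν)) := by
  let U (q : (DX × DZ) × DY) (j : Fin J) : ℝ :=
    residualProduct (kX (t j).1) (kY (t j).2) (e1 (t j).1) (e2 (t j).2) q
  have hUj (j : Fin J) : Measurable fun q ↦ U q j :=
    measurable_residualProduct (hkXm j) (hkYm j) (he1m j) (he2m j)
  have hU : Measurable U := measurable_pi_lambda _ hUj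
  have hU_L2 (j : Fin J) : MemLp (fun ω ↦ U ((xS 0 ω, zS 0 ω), yS 0 ω) j) 2 μ := by
    have : ENNReal.HolderTriple 4 4 2 := .of_toReal ⟨by norm_num, by norm_num, by norm_num⟩
    exact ((hident 0).comp (hUj j)).symm.memLp_snd <| memLp_residualProduct
      (q := 4) (r := 4) (by norm_num) (by norm_num) (hkX j) (hkY j) (he1 j) (he2 j)
  have hU_mean (j : Fin J) : ∫ ω, U ((xS 0 ω, zS 0 ω), yS 0 ω) j ∂μ = 0 :=
    ((hident 0).comp (hUj j)).integral_eq.trans <|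
      integral_residualProduct_eq_zero_of_condIndepFun hX hZ hY hXY (hkXm j) (hkYm j) (he1m j)
        (he2m j) ((hkX j).mono_exponent (by norm_num)) ((hkY j).mono_exponent (by norm_num))
        (he1 j) (he2 j)
  have hclt := hν.tendstoInDistribution_inv_sqrt_smul_sum
    (W := fun i ω ↦ U ((xS i ω, zS i ω), yS i ω)) hU_L2 hU_mean
    (hindep.comp (fun _ ↦ U) fun _ ↦ hU) fun i ↦ ((hident i).trans (hident 0).symm).comp hU
  have hcont : Continuous fun v : Fin J → ℝ ↦ ∑ j, |v j| ^ p := by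
    fun_prop (disch := grind)
  simp only [rpow_half_mul_sum_abs_SStat_rpow]
  exact hclt (f.compContinuous ⟨_, hcont⟩)

/-- under `H₀`, `n^{p/2}·CI_{n,p}` converges in law to `‖G‖_p^p`, `G ~ N(0,Σ)`. -/
theorem statement_9
    (dx dy dz : ℕ) (hdx : 1 ≤ dx) (hdy : 1 ≤ dy) (hdz : 1 ≤ dz)
    {Ω : Type} [MeasurableSpace Ω] [StandardBorelSpace Ω] [Nonempty Ω]
    (μ : Measure Ω) [IsProbabilityMeasure μ]
    (X : Ω → Fin dx → ℝ) (Z : Ω → Fin dz → ℝ) (Y : Ω → Fin dy → ℝ)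
    (hX : Measurable X) (hZ : Measurable Z) (hY : Measurable Y)
    (p J : ℕ) (hp : 1 ≤ p) (hJ : 1 ≤ J)
    (kX : ((Fin dx → ℝ) × (Fin dz → ℝ)) → ((Fin dx → ℝ) × (Fin dz → ℝ)) → ℝ) (kY : (Fin dy → ℝ) → (Fin dy → ℝ) → ℝ)
    (hk : Assumption1 kX kY)
    (e1 : ((Fin dx → ℝ) × (Fin dz → ℝ)) → (Fin dz → ℝ) → ℝ) (e2 : (Fin dy → ℝ) → (Fin dz → ℝ) → ℝ)
    (he1m : ∀ t1, Measurable (e1 t1)) (he2m : ∀ t2, Measurable (e2 t2))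
    (he1 : ∀ t1, (fun ω => e1 t1 (Z ω)) =ᵐ[μ]
      μ[fun ω' => kX t1 (X ω', Z ω') | MeasurableSpace.comap Z inferInstance])
    (he2 : ∀ t2, (fun ω => e2 t2 (Z ω)) =ᵐ[μ]
      μ[fun ω' => kY t2 (Y ω') | MeasurableSpace.comap Z inferInstance])
    (xS : ℕ → Ω → Fin dx → ℝ) (zS : ℕ → Ω → Fin dz → ℝ) (yS : ℕ → Ω → Fin dy → ℝ)
    (hxS : ∀ i, Measurable (xS i)) (hzS : ∀ i, Measurable (zS i)) (hyS : ∀ i, Measurable (yS i))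
    (hiid : iIndepFun (m := fun _ => inferInstance) (fun i ω => ((xS i ω, zS i ω), yS i ω)) μ)
    (hlaw : ∀ i, μ.map (fun ω => ((xS i ω, zS i ω), yS i ω)) =
      μ.map fun ω => ((X ω, Z ω), Y ω))
    (t : Fin J → (((Fin dx → ℝ) × (Fin dz → ℝ)) × (Fin dy → ℝ)))
    (hH0 : CondIndepFun (MeasurableSpace.comap Z inferInstance) hZ.comap_le X Y μ)
    (ν : Measure (Fin J → ℝ)) (hν : IsCenteredGaussian (covMat μ kX kY e1 e2 xS zS yS t) ν) :
    ∀ f : BoundedContinuousFunction ℝ ℝ,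
      Tendsto (fun n : ℕ => ∫ ω, f ((n : ℝ) ^ ((p : ℝ) / 2) *
          ∑ j : Fin J, |SStat kX kY e1 e2 xS zS yS t n ω j| ^ p) ∂μ) atTop
        (𝓝 (∫ v, f (∑ j : Fin J, |v j| ^ p) ∂ν)) := by
  have : Nonempty (Fin dx) := ⟨⟨0, hdx⟩⟩
  intro f
  simpa using statement_9_general hX hZ hY (p := p) (by exact_mod_cast hp)
    (fun j ↦ (hk.continuous_left (t j).1).measurable)
    (fun j ↦ (hk.continuous_right (t j).2).measurable)
    (fun j ↦ hk.boundedKernel_left.memLp (hk.continuous_left _).measurable (hX.prodMk hZ) 4)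
    (fun j ↦ hk.boundedKernel_right.memLp (hk.continuous_right _).measurable hY 4)
    (fun j ↦ he1m _) (fun j ↦ he2m _) (fun j ↦ he1 _) (fun j ↦ he2 _) hiid
    (fun i ↦ ⟨(((hxS i).prodMk (hzS i)).prodMk (hyS i)).aemeasurable,
      ((hX.prodMk hZ).prodMk hY).aemeasurable, hlaw i⟩) hH0 hν f
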